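/- arXiv:1903.01518 — 2 statements merged into one kernel-verified Lean document; each statement's English description precedes it below -/
import Mathlib

section
/- Let p ≥ 3 be prime, S ⊆ F_p^2 nonempty, and w : F_p^2 → ℝ with supp(w) = S. Then the number of perfect directions with respect to w is at most |S|/2, unless S is a line and w is constant on S. -/
open scoped Classical

/-- A direction (one-dimensional subspace `H` of `F_p^2`) is *perfect* with respect to
`w : F_p^2 → ℝ` if every line in this direction (coset of `H`) has `w`-sum equal to
`(1/p)` times the total `w`-sum. -/
def IsPerfect (p : ℕ) [NeZero p] (w : ZMod p × ZMod p → ℝ)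
    (H : Submodule (ZMod p) (ZMod p × ZMod p)) : Prop :=
  ∀ a : ZMod p × ZMod p,
    ∑ h : H, w (a + (h : ZMod p × ZMod p)) = (∑ z : ZMod p × ZMod p, w z) / p

/-- `S` is an (affine) line in `F_p^2`: a coset of a one-dimensional subspace. -/
def IsLine (p : ℕ) (S : Set (ZMod p × ZMod p)) : Prop :=
  ∃ (a : ZMod p × ZMod p) (H : Submodule (ZMod p) (ZMod p × ZMod p)),
    Module.finrank (ZMod p) H = 1 ∧ S = (a + ·) '' (H : Set (ZMod p × ZMod p))

/-- `S` determines the direction of `H` if some line in that direction contains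
at least two points of `S`; equivalently, two distinct points of `S` differ by an
element of `H`. -/
def Determines (p : ℕ) (S : Set (ZMod p × ZMod p))
    (H : Submodule (ZMod p) (ZMod p × ZMod p)) : Prop :=
  ∃ x ∈ S, ∃ y ∈ S, x ≠ y ∧ x - y ∈ H

open Polynomial in
/-- The bivariate polynomial `f` has total degree at most `n`. -/
def TotalDegreeLE {K : Type*} [CommRing K] (f : K[X][X]) (n : ℕ) : Prop :=
  ∀ i j, (f.coeff i).coeff j ≠ 0 → i + j ≤ n

namespace TotalDegreeLE

open Polynomial

variable {K : Type*} [CommRing K] {f g : K[X][X]} {m n : ℕ}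

theorem mul (hf : TotalDegreeLE f m) (hg : TotalDegreeLE g n) : TotalDegreeLE (f * g) (m + n) := by
  intro i j h
  rw [coeff_mul, finsetSum_coeff] at h
  obtain ⟨a, ha, h⟩ := Finset.exists_ne_zero_of_sum_ne_zero h
  rw [coeff_mul] at h
  obtain ⟨b, hb, h⟩ := Finset.exists_ne_zero_of_sum_ne_zero h
  have h₁ := hf _ _ (left_ne_zero_of_mul h)
  have h₂ := hg _ _ (right_ne_zero_of_mul h)
  have h₃ := Finset.HasAntidiagonal.mem_antidiagonal.1 ha
  have h₄ := Finset.HasAntidiagonal.mem_antidiagonal.1 hb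
  omega

theorem sub (hf : TotalDegreeLE f n) (hg : TotalDegreeLE g n) : TotalDegreeLE (f - g) n := by
  intro i j h
  by_cases h₁ : (f.coeff i).coeff j = 0
  · refine hg i j fun h₂ => h ?_
    simp [h₁, h₂]
  · exact hf i j h₁

theorem one : TotalDegreeLE (1 : K[X][X]) 0 := by
  intro i j h
  rcases Nat.eq_zero_or_pos i with rfl | hi
  · rcases Nat.eq_zero_or_pos j with rfl | hj
    · rfl
    · simp [coeff_one, hj.ne'] at h
  · simp [coeff_one, hi.ne'] at h

theorem X_sub_C_linear (a b : K) : TotalDegreeLE (X - C (C a - C b * X)) 1 := by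
  intro i j h
  by_contra! hij
  apply h
  rw [coeff_sub, coeff_X, coeff_C]
  rcases Nat.eq_zero_or_pos i with rfl | hi
  · have hj : 2 ≤ j := by omega
    simp [coeff_C, coeff_X, show j ≠ 0 by omega, show 1 ≠ j by omega]
  · split_ifs with h₁ h₂
    · omega
    · have hj : j ≠ 0 := by omega
      simp [coeff_one, hj]
    · omega
    · simp

theorem prod {ι : Type*} (s : Finset ι) (φ : ι → K[X][X]) (h : ∀ i ∈ s, TotalDegreeLE (φ i) 1) :
    TotalDegreeLE (∏ i ∈ s, φ i) s.card := by
  classical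
  induction s using Finset.induction_on with
  | empty => simpa using one
  | insert a s ha ih =>
    rw [Finset.prod_insert ha, Finset.card_insert_of_notMem ha, add_comm]
    exact (h a (Finset.mem_insert_self a s)).mul
      (ih fun i hi => h i (Finset.mem_insert_of_mem hi))

theorem X_mul (hf : TotalDegreeLE f n) : TotalDegreeLE (X * f) (n + 1) := by
  intro i j h
  cases i with
  | zero => simp at h
  | succ i =>
    rw [coeff_X_mul] at h
    have := hf i j h
    omega

theorem C_coeff_mul {s t : ℕ} (hf : TotalDegreeLE f n) (hg : TotalDegreeLE g t) (hst : t = s + 1) :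
    TotalDegreeLE (C (f.coeff s) * g) (n + 1) := by
  intro i j h
  rw [coeff_C_mul, coeff_mul] at h
  obtain ⟨b, hb, h⟩ := Finset.exists_ne_zero_of_sum_ne_zero h
  have h₁ := hf _ _ (left_ne_zero_of_mul h)
  have h₂ := hg _ _ (right_ne_zero_of_mul h)
  have h₃ := Finset.HasAntidiagonal.mem_antidiagonal.1 hb
  omega

/-- Division with remainder of `X ^ n` by a monic polynomial respects total degrees. -/
theorem exists_X_pow_eq {R : K[X][X]} {t : ℕ} (hR : TotalDegreeLE R t) (hm : R.coeff t = 1)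
    (hd : ∀ i, t < i → R.coeff i = 0) (ht : 1 ≤ t) (n : ℕ) :
    ∃ q r : K[X][X], X ^ n = R * q + r ∧ (∀ i, t ≤ i → r.coeff i = 0) ∧ TotalDegreeLE r n := by
  obtain ⟨s, rfl⟩ : ∃ s, t = s + 1 := ⟨t - 1, by omega⟩
  induction n with
  | zero =>
    refine ⟨0, 1, by simp, fun i hi => ?_, one⟩
    rw [coeff_one, if_neg (by omega)]
  | succ n ih =>
    obtain ⟨q, r, h, hr, hdeg⟩ := ih
    refine ⟨X * q + C (r.coeff s), X * r - C (r.coeff s) * R, ?_, fun i hi => ?_,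
      hdeg.X_mul.sub (hdeg.C_coeff_mul hR rfl)⟩
    · rw [pow_succ, h]; ring
    · obtain ⟨i, rfl⟩ : ∃ j, i = j + 1 := ⟨i - 1, by omega⟩
      rw [coeff_sub, coeff_X_mul, coeff_C_mul]
      rcases eq_or_lt_of_le hi with hi | hi
      · obtain rfl : s = i := by omega
        simp [hm]
      · rw [hd _ hi, hr i (by omega)]; simp

end TotalDegreeLE

section Lacunary

open Polynomial

variable {p : ℕ} [Fact p.Prime] {ι : Type*}

theorem prod_X_sub_C_dvd_X_pow_sub_X {T : Finset ι} {φ : ι → ZMod p} (hφ : Set.InjOn φ T) :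
    (∏ z ∈ T, (X - C (φ z))) ∣ (X ^ p - X : (ZMod p)[X]) := by
  refine Finset.prod_dvd_of_coprime (fun a ha b hb hab => ?_) fun a _ => ?_
  · exact isCoprime_X_sub_C_of_isUnit_sub
      (sub_ne_zero.2 fun h => hab (hφ ha hb h)).isUnit
  · rw [dvd_iff_isRoot]
    simp [ZMod.pow_card]

/-- If the projections `A - m B` are injective on `T` for all `m ∈ P`, then modulo
`∏ (X - A z)` the monomial `X ^ p` is congruent to a polynomial of small degree. -/
theorem exists_dvd_X_pow_sub {T : Finset ι} {A B : ι → ZMod p} {P : Finset (ZMod p)}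
    (hT : 2 ≤ T.card) (hP : ∀ m ∈ P, Set.InjOn (fun z => A z - B z * m) T) :
    ∃ ρ : (ZMod p)[X], ρ.natDegree ≤ max 1 (p - P.card) ∧
      (∏ z ∈ T, (X - C (A z))) ∣ X ^ p - ρ := by
  set R : (ZMod p)[X][X] := ∏ z ∈ T, (X - C (C (A z) - C (B z) * X)) with hRdef
  have hRm : R.Monic := monic_prod_of_monic _ _ fun z _ => monic_X_sub_C _
  have hRd : R.natDegree = T.card := by
    rw [hRdef, natDegree_prod_of_monic _ _ fun z _ => monic_X_sub_C _]
    simp only [natDegree_X_sub_C, Finset.sum_const, smul_eq_mul, mul_one]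
  have hRt : TotalDegreeLE R T.card :=
    TotalDegreeLE.prod _ _ fun z _ => TotalDegreeLE.X_sub_C_linear _ _
  have hRmap : ∀ m : ZMod p, R.map (evalRingHom m) = ∏ z ∈ T, (X - C (A z - B z * m)) := by
    intro m
    rw [hRdef, Polynomial.map_prod]
    refine Finset.prod_congr rfl fun z _ => ?_
    simp
  obtain ⟨q, r, hqr, hr, hrt⟩ := hRt.exists_X_pow_eq (by rw [← hRd]; exact hRm)
    (fun i hi => coeff_eq_zero_of_natDegree_lt (by omega)) (by omega) p
  have hmap : ∀ m : ZMod p, (X ^ p : (ZMod p)[X]) =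
      (∏ z ∈ T, (X - C (A z - B z * m))) * q.map (evalRingHom m) + r.map (evalRingHom m) := by
    intro m
    rw [← hRmap, ← Polynomial.map_mul, ← Polynomial.map_add, ← hqr]
    simp
  have hrX : ∀ m ∈ P, r.map (evalRingHom m) = X := by
    intro m hm
    have h₁ := prod_X_sub_C_dvd_X_pow_sub_X (hP m hm)
    have h₂ : (∏ z ∈ T, (X - C (A z - B z * m))) ∣ X - r.map (evalRingHom m) := by
      have h₃ : X - r.map (evalRingHom m) =
          (∏ z ∈ T, (X - C (A z - B z * m))) * q.map (evalRingHom m) - (X ^ p - X) := by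
        rw [hmap m]; ring
      rw [h₃]
      exact (dvd_mul_right _ _).sub h₁
    have hnd : (∏ z ∈ T, (X - C (A z - B z * m))).natDegree = T.card := by
      rw [natDegree_prod_of_monic _ _ fun z _ => monic_X_sub_C _]
      simp only [natDegree_X_sub_C, Finset.sum_const, smul_eq_mul, mul_one]
    have h₄ : X - r.map (evalRingHom m) = 0 := by
      by_contra h₀
      have h₅ := natDegree_le_of_dvd h₂ h₀
      rw [hnd] at h₅
      have h₆ := coeff_natDegree (p := X - r.map (evalRingHom m))
      rw [coeff_sub, coeff_map, hr _ h₅, coeff_X, if_neg (by omega)] at h₆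
      simp only [map_zero, sub_zero] at h₆
      exact h₀ (leadingCoeff_eq_zero.1 h₆.symm)
    exact (sub_eq_zero.1 h₄).symm
  refine ⟨r.map (evalRingHom 0), ?_, ?_⟩
  · rw [natDegree_le_iff_coeff_eq_zero]
    intro i hi
    rw [max_lt_iff] at hi
    have h₀ : r.coeff i = 0 := by
      by_contra h
      have hle : i + (r.coeff i).natDegree ≤ p := hrt i _ (by
        rw [coeff_natDegree]; exact leadingCoeff_ne_zero.2 h)
      refine h (eq_zero_of_natDegree_lt_card_of_eval_eq_zero' _ P (fun m hm => ?_) (by omega))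
      have h₇ := congrArg (fun f => coeff f i) (hrX m hm)
      simpa [coeff_X, show 1 ≠ i by omega] using h₇
    rw [coeff_map, h₀, map_zero]
  · refine ⟨q.map (evalRingHom 0), ?_⟩
    have := hmap 0
    simp only [mul_zero, sub_zero] at this
    rw [this]; ring

/-- A fully reducible divisor of a lacunary polynomial `X ^ p - ρ` of degree at least
`2 * natDegree ρ` has only simple zeros or only one zero. -/
theorem injOn_or_subsingleton_of_dvd {T : Finset ι} {A : ι → ZMod p} {ρ : (ZMod p)[X]} {e : ℕ}
    (hρ : ρ.natDegree ≤ e) (he : 1 ≤ e) (hep : e < p)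
    (hdvd : (∏ z ∈ T, (X - C (A z))) ∣ X ^ p - ρ) (hT : 2 * e ≤ T.card) :
    Set.InjOn A T ∨ ∀ x ∈ T, ∀ y ∈ T, A x = A y := by
  obtain ⟨I, k, hAI, hprod, hcard, hkpos⟩ : ∃ (I : Finset (ZMod p)) (k : ZMod p → ℕ),
      (∀ z ∈ T, A z ∈ I) ∧ (∏ z ∈ T, (X - C (A z))) = ∏ a ∈ I, (X - C a) ^ k a ∧
      T.card = ∑ a ∈ I, k a ∧ ∀ a ∈ I, 1 ≤ k a := by
    refine ⟨T.image A, fun a => (T.filter fun z => A z = a).card,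
      fun z hz => Finset.mem_image_of_mem A hz, Finset.prod_comp (fun a => X - C a) A,
      Finset.card_eq_sum_card_image A T, fun a ha => ?_⟩
    obtain ⟨z, hz, h⟩ := Finset.mem_image.1 ha
    exact Nat.one_le_iff_ne_zero.2 (Finset.card_ne_zero_of_mem (Finset.mem_filter.2 ⟨hz, h⟩))
  have hpow : ∀ a ∈ I, (X - C a) ^ k a ∣ X ^ p - ρ := by
    rw [hprod] at hdvd
    exact fun a ha => (Finset.dvd_prod_of_mem (fun a => (X - C a) ^ k a) ha).trans hdvd
  have hroot : ∀ a ∈ I, (X - ρ).eval a = 0 := by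
    intro a ha
    have h₁ : (X - C a) ∣ X ^ p - ρ :=
      (dvd_pow_self _ (Nat.one_le_iff_ne_zero.1 (hkpos a ha))).trans (hpow a ha)
    rw [dvd_iff_isRoot, IsRoot.def] at h₁
    simpa [ZMod.pow_card] using h₁
  by_cases hX : X - ρ = 0
  · left
    have hX' : ρ = X := (sub_eq_zero.1 hX).symm
    have hsep : (∏ z ∈ T, (X - C (A z))).Separable := by
      refine Separable.of_dvd ?_ (hX' ▸ hdvd)
      exact galois_poly_separable p p dvd_rfl
    intro x hx y hy hxy
    exact (separable_prod_X_sub_C_iff' (s := T) (f := A)).1 hsep x hx y hy hxy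
  · right
    have hI : I.card ≤ (X - ρ).natDegree :=
      card_le_degree_of_subset_roots fun a ha => by
        rw [Finset.mem_val] at ha
        exact (mem_roots hX).2 (hroot a ha)
    by_cases hder : derivative ρ = 0
    · have h0 : ρ.natDegree = 0 := by
        by_contra h
        obtain ⟨n, hn⟩ := Nat.exists_eq_succ_of_ne_zero h
        have h₁ := congrArg (fun f => coeff f n) hder
        simp only [coeff_derivative, coeff_zero, mul_eq_zero] at h₁
        rcases h₁ with h₁ | h₁
        · rw [← Nat.succ_eq_add_one, ← hn, coeff_natDegree, leadingCoeff_eq_zero] at h₁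
          simp [h₁] at h
        · have h₂ : ((n + 1 : ℕ) : ZMod p) = 0 := by exact_mod_cast h₁
          have := Nat.le_of_dvd (by omega) ((ZMod.natCast_eq_zero_iff _ _).1 h₂)
          omega
      have hI1 : I.card ≤ 1 := hI.trans ((natDegree_sub_le _ _).trans (by simp [h0]))
      intro x hx y hy
      exact Finset.card_le_one.1 hI1 _ (hAI x hx) _
        (hAI y hy)
    · exfalso
      have hd : (∏ a ∈ I, (X - C a) ^ (k a - 1)) ∣ derivative ρ := by
        refine Finset.prod_dvd_of_coprime (fun a _ b _ hab => ?_) fun a ha => ?_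
        · exact (isCoprime_X_sub_C_of_isUnit_sub (sub_ne_zero.2 hab).isUnit).pow
        · have h₁ := pow_sub_one_dvd_derivative_of_pow_dvd (hpow a ha)
          have h₂ : derivative (X ^ p - ρ) = -derivative ρ := by
            rw [derivative_sub, derivative_X_pow, CharP.cast_eq_zero]; simp
          rwa [h₂, dvd_neg] at h₁
      have h₂ := natDegree_le_of_dvd hd hder
      rw [natDegree_prod_of_monic _ _ fun a _ => (monic_X_sub_C a).pow _] at h₂
      simp only [natDegree_pow, natDegree_X_sub_C, mul_one] at h₂
      have h₃ : (derivative ρ).natDegree ≤ e - 1 :=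
        (natDegree_derivative_le ρ).trans (by omega)
      have h₄ : (X - ρ).natDegree ≤ e :=
        (natDegree_sub_le _ _).trans (max_le (by simpa using he) hρ)
      have h₅ : ∑ a ∈ I, k a = ∑ a ∈ I, (k a - 1) + I.card := by
        rw [Finset.card_eq_sum_ones, ← Finset.sum_add_distrib]
        exact Finset.sum_congr rfl fun a ha => by have := hkpos a ha; omega
      omega

end Lacunary

section Plane

variable {p : ℕ} [Fact p.Prime]

theorem mem_span_of_cross_eq_zero {u v : ZMod p × ZMod p} (hu : u ≠ 0)
    (h : u.1 * v.2 - u.2 * v.1 = 0) : v ∈ Submodule.span (ZMod p) {u} := by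
  rw [Submodule.mem_span_singleton]
  by_cases h₁ : u.1 = 0
  · have h₂ : u.2 ≠ 0 := fun h₂ => hu (Prod.ext h₁ h₂)
    refine ⟨v.2 / u.2, Prod.ext ?_ ?_⟩
    · have : v.1 = 0 := by simpa [h₁, h₂] using h
      simp [h₁, this]
    · simp [h₂]
  · refine ⟨v.1 / u.1, Prod.ext ?_ ?_⟩
    · simp [h₁]
    · simp only [Prod.smul_snd, smul_eq_mul]
      field_simp
      linear_combination -h

theorem eq_span_of_finrank_eq_one {H : Submodule (ZMod p) (ZMod p × ZMod p)}
    (hH : Module.finrank (ZMod p) H = 1) {v : ZMod p × ZMod p} (hv : v ≠ 0) (hvH : v ∈ H) :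
    Submodule.span (ZMod p) {v} = H := by
  refine Submodule.eq_of_le_of_finrank_eq ?_ ?_
  · rwa [Submodule.span_singleton_le_iff_mem]
  · rw [finrank_span_singleton hv, hH]

theorem exists_ne_zero_mem_of_finrank_eq_one {H : Submodule (ZMod p) (ZMod p × ZMod p)}
    (hH : Module.finrank (ZMod p) H = 1) : ∃ v ∈ H, v ≠ 0 := by
  refine H.exists_mem_ne_zero_of_ne_bot ?_
  rintro rfl
  simp at hH

/-- The points of the line through `a` in direction `H`. -/
noncomputable def linePoints (H : Submodule (ZMod p) (ZMod p × ZMod p)) (a : ZMod p × ZMod p) :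
    Finset (ZMod p × ZMod p) :=
  Finset.univ.filter fun z => z - a ∈ H

variable {H : Submodule (ZMod p) (ZMod p × ZMod p)}

theorem mem_linePoints {a z : ZMod p × ZMod p} : z ∈ linePoints H a ↔ z - a ∈ H := by
  simp [linePoints]

theorem self_mem_linePoints (a : ZMod p × ZMod p) : a ∈ linePoints H a := by
  simp [mem_linePoints]

theorem mem_linePoints_comm {a z : ZMod p × ZMod p} : z ∈ linePoints H a ↔ a ∈ linePoints H z := by
  rw [mem_linePoints, mem_linePoints, ← neg_sub, H.neg_mem_iff]

theorem sum_linePoints (H : Submodule (ZMod p) (ZMod p × ZMod p)) [Fintype H]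
    (a : ZMod p × ZMod p) (w : ZMod p × ZMod p → ℝ) :
    ∑ z ∈ linePoints H a, w z = ∑ h : H, w (a + (h : ZMod p × ZMod p)) := by
  symm
  refine Finset.sum_bij (fun h _ => a + (h : ZMod p × ZMod p)) (fun h _ => ?_)
    (fun h _ h' _ e => ?_) (fun z hz => ?_) fun _ _ => rfl
  · simp [mem_linePoints]
  · exact Subtype.ext (add_left_cancel e)
  · exact ⟨⟨z - a, mem_linePoints.1 hz⟩, Finset.mem_univ _, by simp⟩

theorem card_linePoints (hH : Module.finrank (ZMod p) H = 1) (a : ZMod p × ZMod p) :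
    (linePoints H a).card = p := by
  have h₁ : Nat.card H = p := by
    rw [Module.natCard_eq_pow_finrank (K := ZMod p), hH, Nat.card_zmod, pow_one]
  have h₂ := sum_linePoints H a fun _ => 1
  rw [Finset.sum_const, Finset.sum_const, Finset.card_univ, ← Nat.card_eq_fintype_card, h₁] at h₂
  simpa using h₂

theorem sum_sum_linePoints (hH : Module.finrank (ZMod p) H = 1) (w : ZMod p × ZMod p → ℝ) :
    ∑ a, ∑ z ∈ linePoints H a, w z = p * ∑ z, w z := by
  rw [Finset.sum_comm' (t' := Finset.univ) (s' := fun z => linePoints H z)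
    (fun a z => by simp [mem_linePoints_comm (a := a)])]
  simp only [Finset.sum_const, card_linePoints hH, nsmul_eq_mul, Finset.mul_sum]

/-- Lines through a common point `a` in distinct directions are disjoint away from `a`. -/
theorem disjoint_linePoints_erase {H' : Submodule (ZMod p) (ZMod p × ZMod p)}
    (hH : Module.finrank (ZMod p) H = 1) (hH' : Module.finrank (ZMod p) H' = 1) (h : H ≠ H')
    (a : ZMod p × ZMod p) :
    Disjoint ((linePoints H a).erase a) ((linePoints H' a).erase a) := by
  rw [Finset.disjoint_left]
  intro z hz hz'
  rw [Finset.mem_erase, mem_linePoints] at hz hz'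
  have h₀ := sub_ne_zero.2 hz.1
  exact h ((eq_span_of_finrank_eq_one hH h₀ hz.2).symm.trans
    (eq_span_of_finrank_eq_one hH' h₀ hz'.2))

theorem mul_card_le_card_of_linePoints {D : Finset (Submodule (ZMod p) (ZMod p × ZMod p))}
    (hD : ∀ H ∈ D, Module.finrank (ZMod p) H = 1) {a : ZMod p × ZMod p}
    {A : Finset (ZMod p × ZMod p)} (ha : a ∉ A) {k : ℕ}
    (h : ∀ H ∈ D, k ≤ (A.filter fun z => z ∈ linePoints H a).card) : k * D.card ≤ A.card := by
  have hdisj : (D : Set (Submodule (ZMod p) (ZMod p × ZMod p))).PairwiseDisjoint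
      fun H => A.filter fun z => z ∈ linePoints H a := by
    intro H hH H' hH' hne
    refine (disjoint_linePoints_erase (hD H hH) (hD H' hH') hne a).mono ?_ ?_ <;>
    · intro z hz
      rw [Finset.mem_filter] at hz
      exact Finset.mem_erase.2 ⟨fun e => ha (e ▸ hz.1), hz.2⟩
  calc k * D.card = ∑ _H ∈ D, k := by rw [Finset.sum_const, smul_eq_mul, mul_comm]
    _ ≤ ∑ H ∈ D, (A.filter fun z => z ∈ linePoints H a).card := Finset.sum_le_sum h
    _ = (D.biUnion fun H => A.filter fun z => z ∈ linePoints H a).card :=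
      (Finset.card_biUnion hdisj).symm
    _ ≤ A.card := Finset.card_le_card (Finset.biUnion_subset.2 fun _ _ => Finset.filter_subset _ _)

/-- Two lines in distinct directions meet. -/
theorem exists_mem_linePoints_inter {H' : Submodule (ZMod p) (ZMod p × ZMod p)}
    (hH : Module.finrank (ZMod p) H = 1) (hH' : Module.finrank (ZMod p) H' = 1) (h : H ≠ H')
    (a b : ZMod p × ZMod p) : ∃ z, z ∈ linePoints H a ∧ z ∈ linePoints H' b := by
  obtain ⟨u, hu, hu0⟩ := exists_ne_zero_mem_of_finrank_eq_one hH
  obtain ⟨v, hv, hv0⟩ := exists_ne_zero_mem_of_finrank_eq_one hH'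
  have hdet : u.1 * v.2 - u.2 * v.1 ≠ 0 := by
    intro h₀
    have h₁ := mem_span_of_cross_eq_zero hu0 h₀
    rw [eq_span_of_finrank_eq_one hH hu0 hu] at h₁
    exact h ((eq_span_of_finrank_eq_one hH hv0 h₁).symm.trans
      (eq_span_of_finrank_eq_one hH' hv0 hv))
  obtain ⟨t, ht⟩ : ∃ t, t * (u.1 * v.2 - u.2 * v.1) = (b - a).1 * v.2 - (b - a).2 * v.1 :=
    ⟨_, div_mul_cancel₀ _ hdet⟩
  refine ⟨a + t • u, ?_, ?_⟩
  · rw [mem_linePoints, add_sub_cancel_left]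
    exact H.smul_mem _ hu
  · rw [mem_linePoints, ← eq_span_of_finrank_eq_one hH' hv0 hv]
    refine mem_span_of_cross_eq_zero hv0 ?_
    simp only [Prod.fst_sub, Prod.snd_sub, Prod.fst_add, Prod.snd_add, Prod.smul_fst,
      Prod.smul_snd, smul_eq_mul] at ht ⊢
    linear_combination -ht

/-- A point set that determines few directions is collinear (Rédei, Szőnyi). -/
theorem collinear_of_few_directions {T : Finset (ZMod p × ZMod p)}
    {D : Finset (Submodule (ZMod p) (ZMod p × ZMod p))}
    (hD : ∀ H ∈ D, Module.finrank (ZMod p) H = 1) (hD0 : 1 ≤ D.card)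
    (hT : ∀ x ∈ T, ∀ y ∈ T, ∀ H ∈ D, x - y ∈ H → x = y)
    (hcard : 2 * p ≤ T.card + 2 * D.card) {x y : ZMod p × ZMod p} (hx : x ∈ T) (hy : y ∈ T)
    (hxy : x ≠ y) : ∀ z ∈ T, z - x ∈ Submodule.span (ZMod p) {x - y} := by
  by_contra! hcon
  obtain ⟨z, hz, hzx⟩ := hcon
  have hp := (Fact.out : p.Prime).two_le
  have he0 : x - y ≠ 0 := sub_ne_zero.2 hxy
  have hcross : (x - y).1 * (z - x).2 - (x - y).2 * (z - x).1 ≠ 0 :=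
    fun h => hzx (mem_span_of_cross_eq_zero he0 h)
  have hzx0 : z ≠ x := fun h => hzx (by simp [h])
  have he1 : z - x ≠ 0 := sub_ne_zero.2 hzx0
  have hcomb : ∀ m : ZMod p, (x - y) - m • (z - x) ≠ 0 := by
    intro m h
    rw [sub_eq_zero] at h
    apply hcross
    rw [h]
    simp only [Prod.smul_fst, Prod.smul_snd, smul_eq_mul]
    ring
  set P : Finset (ZMod p) := Finset.univ.filter fun m =>
    Submodule.span (ZMod p) {(x - y) - m • (z - x)} ∈ D with hP
  have hDP : D.card ≤ P.card := by
    refine (Finset.card_le_card (t := P.image fun m =>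
      Submodule.span (ZMod p) {(x - y) - m • (z - x)}) fun H hH => ?_).trans Finset.card_image_le
    obtain ⟨v, hv, hv0⟩ := exists_ne_zero_mem_of_finrank_eq_one (hD H hH)
    have hHv := eq_span_of_finrank_eq_one (hD H hH) hv0 hv
    have hdet : (z - x).1 * v.2 - (z - x).2 * v.1 ≠ 0 := by
      intro h
      refine hzx0 (hT z hz x hx H hH ?_)
      rw [← hHv]
      exact mem_span_of_cross_eq_zero hv0 (by linear_combination -h)
    obtain ⟨m, hm⟩ : ∃ m, m * ((z - x).1 * v.2 - (z - x).2 * v.1) =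
        (x - y).1 * v.2 - (x - y).2 * v.1 := ⟨_, div_mul_cancel₀ _ hdet⟩
    have hmem : (x - y) - m • (z - x) ∈ H := by
      rw [← hHv]
      refine mem_span_of_cross_eq_zero hv0 ?_
      simp only [Prod.fst_sub, Prod.snd_sub, Prod.smul_fst, Prod.smul_snd, smul_eq_mul] at hm ⊢
      linear_combination hm
    have hspan := eq_span_of_finrank_eq_one (hD H hH) (hcomb m) hmem
    exact Finset.mem_image.2 ⟨m, Finset.mem_filter.2 ⟨Finset.mem_univ _, hspan.symm ▸ hH⟩, hspan⟩
  have hinj : ∀ m ∈ P, Set.InjOn (fun u : ZMod p × ZMod p =>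
      ((x - y).1 * u.2 - (x - y).2 * u.1) - ((z - x).1 * u.2 - (z - x).2 * u.1) * m) T := by
    intro m hm u hu v hv huv
    refine hT u hu v hv _ (Finset.mem_filter.1 hm).2 (mem_span_of_cross_eq_zero (hcomb m) ?_)
    simp only [Prod.fst_sub, Prod.snd_sub, Prod.smul_fst, Prod.smul_snd, smul_eq_mul] at huv ⊢
    linear_combination huv
  have hT2 : 2 ≤ T.card := Finset.one_lt_card.2 ⟨x, hx, y, hy, hxy⟩
  obtain ⟨ρ, hρ, hdvd⟩ := exists_dvd_X_pow_sub hT2 hinj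
  rcases injOn_or_subsingleton_of_dvd hρ (by omega) (by omega) hdvd (by omega) with h | h
  · refine hxy (h hx hy ?_)
    simp only [Prod.fst_sub, Prod.snd_sub]
    ring
  · apply hcross
    have := h z hz x hx
    simp only [Prod.fst_sub, Prod.snd_sub] at this ⊢
    linear_combination this

end Plane

section PerfectDirections

variable {p : ℕ} [Fact p.Prime] {D : Finset (Submodule (ZMod p) (ZMod p × ZMod p))}
  {w : ZMod p × ZMod p → ℝ} {c : ℝ}

theorem card_neg_add_card_pos_le_card_support (w : ZMod p × ZMod p → ℝ) :
    (Finset.univ.filter fun z => w z < 0).card + (Finset.univ.filter fun z => 0 < w z).card ≤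
      (Finset.univ.filter fun z => w z ≠ 0).card := by
  rw [← Finset.card_union_of_disjoint]
  · refine Finset.card_le_card fun z hz => ?_
    simp only [Finset.mem_union, Finset.mem_filter, Finset.mem_univ, true_and] at hz ⊢
    rcases hz with h | h
    · exact h.ne
    · exact h.ne'
  · rw [Finset.disjoint_filter]
    exact fun z _ h => h.le.not_gt

theorem le_of_card_support_lt (hD : ∀ H ∈ D, Module.finrank (ZMod p) H = 1) (hc : 0 ≤ c)
    (hsum : ∀ H ∈ D, ∀ a, ∑ z ∈ linePoints H a, w z = c)
    (hcard : (Finset.univ.filter fun z => w z ≠ 0).card < 2 * D.card) (u : ZMod p × ZMod p) :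
    w u ≤ c := by
  by_contra! hu
  have hN : 1 * D.card ≤ (Finset.univ.filter fun z => w z < 0).card := by
    refine mul_card_le_card_of_linePoints hD (a := u) (by simp; linarith) fun H hH => ?_
    rw [Nat.one_le_iff_ne_zero, Finset.card_ne_zero]
    by_contra! h
    have h₀ : ∀ z ∈ linePoints H u, 0 ≤ w z := by
      intro z hz
      by_contra! hz0
      exact Finset.notMem_empty z (h ▸ by simp [hz, hz0])
    have := Finset.single_le_sum h₀ (self_mem_linePoints u)
    rw [hsum H hH] at this
    linarith
  obtain ⟨n, hn⟩ := Finset.card_pos.1 (show 0 < (Finset.univ.filter fun z => w z < 0).card by omega)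
  have hn0 : w n < 0 := by simpa using hn
  have hP : 1 * D.card ≤ (Finset.univ.filter fun z => 0 < w z).card := by
    refine mul_card_le_card_of_linePoints hD (a := n) (by simp; linarith) fun H hH => ?_
    rw [Nat.one_le_iff_ne_zero, Finset.card_ne_zero]
    by_contra! h
    have h₀ : ∀ z ∈ linePoints H n, w z ≤ 0 := by
      intro z hz
      by_contra! hz0
      exact Finset.notMem_empty z (h ▸ by simp [hz, hz0])
    have := Finset.sum_lt_sum h₀ ⟨n, self_mem_linePoints n, hn0⟩
    rw [hsum H hH, Finset.sum_const_zero] at this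
    linarith
  have := card_neg_add_card_pos_le_card_support w
  omega

theorem nonneg_of_card_support_lt (hD : ∀ H ∈ D, Module.finrank (ZMod p) H = 1) (hc : 0 ≤ c)
    (hsum : ∀ H ∈ D, ∀ a, ∑ z ∈ linePoints H a, w z = c)
    (hcard : (Finset.univ.filter fun z => w z ≠ 0).card < 2 * D.card) (n : ZMod p × ZMod p) :
    0 ≤ w n := by
  by_contra! hn0
  have hle := le_of_card_support_lt hD hc hsum hcard
  have hP : 2 * D.card ≤ (Finset.univ.filter fun z => 0 < w z).card := by
    refine mul_card_le_card_of_linePoints hD (a := n) (by simp; linarith) fun H hH => ?_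
    have heq : ((Finset.univ.filter fun z => 0 < w z).filter fun z => z ∈ linePoints H n) =
        (linePoints H n).filter fun z => 0 < w z := by
      ext z; simp [and_comm]
    rw [heq]
    by_contra! hlt
    have h₁ : ∑ z ∈ linePoints H n, w z < ∑ z ∈ linePoints H n, if 0 < w z then w z else 0 := by
      refine Finset.sum_lt_sum (fun z _ => ?_) ⟨n, self_mem_linePoints n, ?_⟩
      · split_ifs with h
        · exact le_rfl
        · exact not_lt.1 h
      · rwa [if_neg (by linarith)]
    rw [hsum H hH, ← Finset.sum_filter] at h₁
    have h₂ := Finset.sum_le_card_nsmul ((linePoints H n).filter fun z => 0 < w z) w c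
      fun z _ => hle z
    rw [nsmul_eq_mul] at h₂
    have h₃ : (((linePoints H n).filter fun z => 0 < w z).card : ℝ) ≤ 1 := by
      exact_mod_cast Nat.lt_succ_iff.1 hlt
    nlinarith
  have := card_neg_add_card_pos_le_card_support w
  omega

theorem sum_eq_of_linePoints {H : Submodule (ZMod p) (ZMod p × ZMod p)}
    (hH : Module.finrank (ZMod p) H = 1) (hsum : ∀ a, ∑ z ∈ linePoints H a, w z = c) :
    ∑ z, w z = p * c := by
  have h := sum_sum_linePoints hH w
  simp only [hsum, Finset.sum_const, Finset.card_univ, Fintype.card_prod, ZMod.card,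
    nsmul_eq_mul, Nat.cast_mul, mul_assoc] at h
  exact (mul_left_cancel₀ (Nat.cast_ne_zero.2 (Fact.out : p.Prime).ne_zero) h).symm

theorem card_le_of_eq_zero (hD : ∀ H ∈ D, Module.finrank (ZMod p) H = 1) (hc : 0 < c)
    (hsum : ∀ H ∈ D, ∀ a, ∑ z ∈ linePoints H a, w z = c) (hnn : ∀ z, 0 ≤ w z)
    (htot : ∑ z, w z = p * c) {a : ZMod p × ZMod p} (ha : w a = 0) : D.card ≤ p := by
  have hdisj : (D : Set (Submodule (ZMod p) (ZMod p × ZMod p))).PairwiseDisjoint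
      fun H => (linePoints H a).erase a := fun H hH H' hH' hne =>
    disjoint_linePoints_erase (hD H hH) (hD H' hH') hne a
  have h : (D.card : ℝ) * c ≤ p * c := by
    calc (D.card : ℝ) * c = ∑ H ∈ D, ∑ z ∈ (linePoints H a).erase a, w z := by
          rw [← nsmul_eq_mul, ← Finset.sum_const]
          refine Finset.sum_congr rfl fun H hH => ?_
          rw [Finset.sum_erase _ ha, hsum H hH]
      _ = ∑ z ∈ D.biUnion fun H => (linePoints H a).erase a, w z := (Finset.sum_biUnion hdisj).symm
      _ ≤ ∑ z, w z := Finset.sum_le_sum_of_subset_of_nonneg (Finset.subset_univ _) fun z _ _ => hnn z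
      _ = p * c := htot
  exact_mod_cast le_of_mul_le_mul_right h hc

theorem card_directions_le (hD : ∀ H ∈ D, Module.finrank (ZMod p) H = 1) : D.card ≤ p + 1 := by
  have hp := (Fact.out : p.Prime).two_le
  have h := mul_card_le_card_of_linePoints hD (a := 0)
    (A := Finset.univ.erase (0 : ZMod p × ZMod p)) (k := p - 1) (by simp) fun H hH => by
      have heq : ((Finset.univ.erase (0 : ZMod p × ZMod p)).filter fun z => z ∈ linePoints H 0) =
          (linePoints H 0).erase 0 := by
        ext z; simp
      rw [heq, Finset.card_erase_of_mem (self_mem_linePoints 0), card_linePoints (hD H hH)]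
  rw [Finset.card_erase_of_mem (Finset.mem_univ _), Finset.card_univ, Fintype.card_prod,
    ZMod.card] at h
  obtain ⟨q, rfl⟩ : ∃ q, p = q + 1 := ⟨p - 1, by omega⟩
  have h₁ : (q + 1) * (q + 1) - 1 = q * (q + 1 + 1) := by
    rw [Nat.sub_eq_iff_eq_add (by nlinarith)]; ring
  rw [h₁, Nat.add_sub_cancel] at h
  exact Nat.le_of_mul_le_mul_left h (by omega)

/-- A weight function with more than half as many perfect directions as support points is
constant on a line and zero elsewhere. -/
theorem eq_ite_line_of_card_support_lt (hp3 : 3 ≤ p)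
    (hD : ∀ H ∈ D, Module.finrank (ZMod p) H = 1) (hc : 0 ≤ c)
    (hsum : ∀ H ∈ D, ∀ a, ∑ z ∈ linePoints H a, w z = c) (hne : ∃ z, w z ≠ 0)
    (hcard : (Finset.univ.filter fun z => w z ≠ 0).card < 2 * D.card) :
    ∃ (a : ZMod p × ZMod p) (H : Submodule (ZMod p) (ZMod p × ZMod p)),
      Module.finrank (ZMod p) H = 1 ∧ ∀ z, w z = if z - a ∈ H then c else 0 := by
  have hle := le_of_card_support_lt hD hc hsum hcard
  have hnn := nonneg_of_card_support_lt hD hc hsum hcard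
  have hc0 : 0 < c := by
    obtain ⟨z, hz⟩ := hne
    exact (lt_of_le_of_ne (hnn z) hz.symm).trans_le (hle z)
  obtain ⟨H₁, hH₁⟩ := Finset.card_pos.1 (show 0 < D.card by omega)
  have htot := sum_eq_of_linePoints (hD H₁ hH₁) (hsum H₁ hH₁)
  set S := Finset.univ.filter fun z => w z ≠ 0 with hS
  set T := Finset.univ.filter fun z => w z = c with hT
  have hmemS : ∀ z, z ∈ S ↔ w z ≠ 0 := by simp [hS]
  have hmemT : ∀ z, z ∈ T ↔ w z = c := by simp [hT]
  have hTS : T ⊆ S := fun z hz => (hmemS z).2 (by rw [(hmemT z).1 hz]; exact hc0.ne')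
  have hzero : ∀ x ∈ T, ∀ H ∈ D, ∀ z ∈ linePoints H x, z ≠ x → w z = 0 := by
    intro x hx H hH z hz hzx
    have h := Finset.sum_le_sum_of_subset_of_nonneg (s := {x, z}) (t := linePoints H x) (f := w)
      (by
        intro y hy
        rcases Finset.mem_insert.1 hy with rfl | hy
        · exact self_mem_linePoints y
        · rwa [Finset.mem_singleton.1 hy]) fun y _ _ => hnn y
    rw [Finset.sum_pair hzx.symm, hsum H hH, (hmemT x).1 hx] at h
    linarith [hnn z]
  have hother : ∀ u ∈ S, u ∉ T → ∀ H ∈ D, ∃ z ∈ linePoints H u, z ≠ u ∧ z ∈ S ∧ z ∉ T := by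
    intro u hu huT H hH
    by_contra! hcon
    have h : ∀ z ∈ linePoints H u, z ≠ u → w z = 0 := by
      intro z hz hzu
      by_contra hz0
      have hzT := hcon z hz hzu ((hmemS z).2 hz0)
      exact (hmemS u).1 hu (hzero z hzT H hH u (mem_linePoints_comm.1 hz) hzu.symm)
    have h₁ := Finset.sum_eq_single_of_mem u (self_mem_linePoints u) h
    rw [hsum H hH] at h₁
    exact huT ((hmemT u).2 h₁.symm)
  have hcount : 2 * p ≤ S.card + T.card := by
    set φ : ZMod p × ZMod p → ℝ := fun z => (if z ∈ S then 1 else 0) + (if z ∈ T then 1 else 0)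
      with hφ
    have hφ0 : ∀ z, 0 ≤ φ z := fun z => by simp only [hφ]; positivity
    have hφS : ∀ z ∈ S, 1 ≤ φ z := fun z hz => by
      simp only [hφ, if_pos hz]
      split_ifs <;> norm_num
    have hline : ∀ a, (2 : ℝ) ≤ ∑ z ∈ linePoints H₁ a, φ z := by
      intro a
      obtain ⟨z, hz, hzS⟩ : ∃ z ∈ linePoints H₁ a, z ∈ S := by
        by_contra! hcon
        have h := Finset.sum_eq_zero fun z hz => not_not.1 (mt (hmemS z).2 (hcon z hz))
        rw [hsum H₁ hH₁] at h
        exact hc0.ne' h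
      by_cases hzT : z ∈ T
      · refine le_trans ?_ (Finset.single_le_sum (fun y _ => hφ0 y) hz)
        simp only [hφ, if_pos hzT, if_pos hzS]
        norm_num
      · obtain ⟨y, hy, hyz, hyS, -⟩ := hother z hzS hzT H₁ hH₁
        have hya : y ∈ linePoints H₁ a := by
          rw [mem_linePoints] at hy hz ⊢
          simpa using H₁.add_mem hy hz
        have h := Finset.sum_le_sum_of_subset_of_nonneg (s := {z, y}) (t := linePoints H₁ a)
          (f := φ) (by
            intro x hx
            rcases Finset.mem_insert.1 hx with rfl | hx
            · exact hz
            · rwa [Finset.mem_singleton.1 hx]) fun x _ _ => hφ0 x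
        rw [Finset.sum_pair hyz.symm] at h
        linarith [hφS z hzS, hφS y hyS]
    have h₁ := Finset.sum_le_sum fun a (_ : a ∈ (Finset.univ : Finset (ZMod p × ZMod p))) => hline a
    have h₂ : ∑ z, φ z = S.card + T.card := by
      simp [hφ, Finset.sum_add_distrib]
    rw [sum_sum_linePoints (hD H₁ hH₁), h₂, Finset.sum_const, Finset.card_univ, Fintype.card_prod,
      ZMod.card, nsmul_eq_mul, Nat.cast_mul, mul_assoc] at h₁
    have h₃ := le_of_mul_le_mul_left h₁ (by positivity)
    rw [mul_comm]
    exact_mod_cast h₃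
  have hDp : D.card ≤ p := by
    by_cases h : ∃ a, w a = 0
    · obtain ⟨a, ha⟩ := h
      exact card_le_of_eq_zero hD hc0 hsum hnn htot ha
    · push Not at h
      exfalso
      have h₁ : S = Finset.univ := Finset.eq_univ_of_forall fun z => (hmemS z).2 (h z)
      rw [h₁, Finset.card_univ, Fintype.card_prod, ZMod.card] at hcard
      have := card_directions_le hD
      nlinarith
  obtain ⟨x, hx⟩ := Finset.card_pos.1 (show 0 < T.card by omega)
  have hnotD : ∀ u, w u ≠ 0 → u ≠ x → Submodule.span (ZMod p) {x - u} ∉ D := by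
    intro u hu hux h
    refine hu (hzero x hx _ h u (mem_linePoints_comm.1 (mem_linePoints.2 ?_)) hux)
    exact Submodule.mem_span_singleton_self _
  obtain ⟨H₀, hH₀, hH₀D, hTH₀⟩ : ∃ H : Submodule (ZMod p) (ZMod p × ZMod p),
      Module.finrank (ZMod p) H = 1 ∧ H ∉ D ∧ ∀ z ∈ T, z - x ∈ H := by
    by_cases h : ∃ y ∈ T, y ≠ x
    · obtain ⟨y, hy, hyx⟩ := h
      refine ⟨Submodule.span (ZMod p) {x - y}, finrank_span_singleton (sub_ne_zero.2 hyx.symm),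
        hnotD y ((hmemS y).1 (hTS hy)) hyx, ?_⟩
      refine collinear_of_few_directions hD (by omega) (fun a ha b hb H hH hab => ?_) (by omega)
        hx hy hyx.symm
      by_contra hne
      exact (hmemS a).1 (hTS ha) (hzero b hb H hH a (mem_linePoints.2 hab) hne)
    · push Not at h
      have hT1 : T.card ≤ 1 := Finset.card_le_one.2 fun a ha b hb => (h a ha).trans (h b hb).symm
      obtain ⟨u, hu, hux⟩ := Finset.exists_mem_ne (show 1 < S.card by omega) x
      refine ⟨Submodule.span (ZMod p) {x - u}, finrank_span_singleton (sub_ne_zero.2 hux.symm),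
        hnotD u ((hmemS u).1 hu) hux, fun z hz => ?_⟩
      simp [h z hz]
  have hTline : T ⊆ linePoints H₀ x := fun z hz => mem_linePoints.2 (hTH₀ z hz)
  by_cases hM : ∃ u ∈ S, u ∉ T
  · exfalso
    obtain ⟨v, hvS, hv⟩ : ∃ v ∈ S, v ∉ linePoints H₀ x := by
      obtain ⟨u, huS, huT⟩ := hM
      by_contra! hcon
      obtain ⟨z, hz, hzu, hzS, -⟩ := hother u huS huT H₁ hH₁
      have h₁ : z - u ∈ H₀ := by
        simpa using H₀.sub_mem (mem_linePoints.1 (hcon z hzS)) (mem_linePoints.1 (hcon u huS))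
      have h₂ := sub_ne_zero.2 hzu
      apply hH₀D
      rwa [← eq_span_of_finrank_eq_one hH₀ h₂ h₁,
        eq_span_of_finrank_eq_one (hD H₁ hH₁) h₂ (mem_linePoints.1 hz)]
    have h₁ := mul_card_le_card_of_linePoints hD (a := v) (A := linePoints H₀ x \ T) (k := 1)
      (fun h => hv (Finset.mem_sdiff.1 h).1) fun H hH => by
        obtain ⟨z, hz, hz₀⟩ := exists_mem_linePoints_inter (hD H hH) hH₀
          (fun h => hH₀D (h ▸ hH)) v x
        refine Finset.card_pos.2 ⟨z, Finset.mem_filter.2 ⟨Finset.mem_sdiff.2 ⟨hz₀, fun hzT => ?_⟩,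
          hz⟩⟩
        exact (hmemS v).1 hvS (hzero z hzT H hH v (mem_linePoints_comm.1 hz)
          fun h => hv (h ▸ hz₀))
    have h₂ := Finset.card_sdiff_add_card_eq_card hTline
    rw [card_linePoints hH₀] at h₂
    omega
  · push Not at hM
    have hST : S = T := Finset.Subset.antisymm hM hTS
    rw [hST] at hcount
    have hTeq := Finset.eq_of_subset_of_card_le hTline (by rw [card_linePoints hH₀]; omega)
    refine ⟨x, H₀, hH₀, fun z => ?_⟩
    split_ifs with h
    · rw [← hmemT, hTeq]
      exact mem_linePoints.2 h
    · by_contra hz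
      exact h (hTH₀ z (hM z ((hmemS z).2 hz)))

end PerfectDirections

theorem stmt2 (p : ℕ) (hp : p.Prime) (hp3 : 3 ≤ p) [NeZero p]
    (S : Set (ZMod p × ZMod p)) (hS : S.Nonempty)
    (w : ZMod p × ZMod p → ℝ) (hsupp : Function.support w = S)
    (hnot : ¬ (IsLine p S ∧ ∃ c : ℝ, ∀ z ∈ S, w z = c)) :
    2 * Nat.card {H : Submodule (ZMod p) (ZMod p × ZMod p) //
        Module.finrank (ZMod p) H = 1 ∧ IsPerfect p w H} ≤ S.ncard := by
  have := Fact.mk hp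
  subst hsupp
  set D : Finset (Submodule (ZMod p) (ZMod p × ZMod p)) := (Set.toFinite
    {H : Submodule (ZMod p) (ZMod p × ZMod p) |
      Module.finrank (ZMod p) H = 1 ∧ IsPerfect p w H}).toFinset with hDdef
  have hmem : ∀ H, H ∈ D ↔ Module.finrank (ZMod p) H = 1 ∧ IsPerfect p w H := by simp [hDdef]
  have hDcard : Nat.card {H : Submodule (ZMod p) (ZMod p × ZMod p) //
      Module.finrank (ZMod p) H = 1 ∧ IsPerfect p w H} = D.card :=
    Nat.subtype_card D hmem
  have hScard : (Function.support w).ncard = (Finset.univ.filter fun z => w z ≠ 0).card := by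
    rw [← Set.ncard_coe_finset]
    congr 1
    ext z
    simp
  have hsum : ∀ H ∈ D, ∀ a, ∑ z ∈ linePoints H a, w z = (∑ z, w z) / p := by
    intro H hH a
    rw [sum_linePoints, ((hmem H).1 hH).2 a]
  have hD : ∀ H ∈ D, Module.finrank (ZMod p) H = 1 := fun H hH => ((hmem H).1 hH).1
  rw [hDcard, hScard]
  by_contra! hlt
  obtain ⟨z₀, hz₀⟩ := hS
  obtain ⟨c, a, H, hH, hw⟩ : ∃ (c : ℝ) (a : ZMod p × ZMod p)
      (H : Submodule (ZMod p) (ZMod p × ZMod p)),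
      Module.finrank (ZMod p) H = 1 ∧ ∀ z, w z = if z - a ∈ H then c else 0 := by
    rcases le_total 0 ((∑ z, w z) / p) with h | h
    · exact ⟨_, eq_ite_line_of_card_support_lt hp3 hD h hsum ⟨z₀, hz₀⟩ hlt⟩
    · obtain ⟨a, H, hH, hw⟩ := eq_ite_line_of_card_support_lt (w := fun z => -w z) hp3 hD
        (neg_nonneg.2 h) (fun H hH a => by rw [Finset.sum_neg_distrib, hsum H hH])
        ⟨z₀, neg_ne_zero.2 hz₀⟩ (by simpa using hlt)
      refine ⟨(∑ z, w z) / p, a, H, hH, fun z => ?_⟩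
      rw [← neg_inj, hw z]
      split_ifs <;> simp
  have hc : c ≠ 0 := by
    rintro rfl
    exact hz₀ (by simp [hw])
  have hsupp : ∀ z, z ∈ Function.support w ↔ z - a ∈ H := by
    intro z
    rw [Function.mem_support, hw]
    simp [hc]
  refine hnot ⟨⟨a, H, hH, ?_⟩, c, fun z hz => ?_⟩
  · ext z
    rw [hsupp]
    constructor
    · exact fun h => ⟨z - a, h, by simp⟩
    · rintro ⟨h, hh, rfl⟩
      simpa using hh
  · rw [hw, if_pos ((hsupp z).1 hz)]
end

section
/- Let p ≥ 3 be prime and S ⊆ F_p^2 a set with |S| = p. If S is not a line, then S determines at least (p+3)/2 directions. -/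
open scoped Classical

section Moments

open Polynomial Finset

variable {p : ℕ} [Fact p.Prime]

/-- Summing a polynomial of degree at most `p - 1` over `ZMod p` extracts its top coefficient. -/
lemma sum_eval_of_natDegree_eq {q : (ZMod p)[X]} (hq : q.natDegree = p - 1) :
    ∑ x : ZMod p, q.eval x = -q.leadingCoeff := by
  have hp := (Fact.out : p.Prime).two_le
  have htop : ∑ x : ZMod p, x ^ (p - 1) = -1 := by
    have h : ∀ x : ZMod p, x ^ (p - 1) = 1 - if x = 0 then 1 else 0 := fun x ↦ by
      split_ifs with hx
      · rw [hx, zero_pow (by omega), sub_self]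
      · rw [ZMod.pow_card_sub_one_eq_one hx, sub_zero]
    simp [h]
  have hlow : ∀ i ∈ range (p - 1), ∑ x : ZMod p, q.coeff i * x ^ i = 0 := fun i hi ↦ by
    rw [← mul_sum, FiniteField.sum_pow_lt_card_sub_one, mul_zero]
    rw [ZMod.card]
    exact mem_range.1 hi
  simp only [eval_eq_sum_range, hq]
  rw [sum_comm, sum_range_succ, sum_eq_zero hlow, ← mul_sum, htop, leadingCoeff, hq]
  ring

lemma natCast_choose_ne_zero {k : ℕ} (hk : k < p) {i : ℕ} (hi : i ≤ k) :
    (k.choose i : ZMod p) ≠ 0 := by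
  rw [Ne, ZMod.natCast_eq_zero_iff]
  intro h
  have h' : p ∣ k.factorial := by
    rw [← Nat.choose_mul_factorial_mul_factorial hi, mul_assoc]
    exact h.mul_right _
  exact hk.not_ge ((Fact.out : p.Prime).dvd_factorial.1 h')

/-- If `x ↦ f x - m * x` is a bijection for at least `n` values of `m`, then the mixed moments of
the graph of `f` of order at most `n` vanish. -/
lemma moment_eq_zero {f : ZMod p → ZMod p} {n : ℕ} {N : Finset (ZMod p)}
    (hN : ∀ m ∈ N, Function.Injective fun x ↦ f x - m * x) (hn : n ≤ #N) (hnp : n < p - 1)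
    {i j : ℕ} (hij : i + j ≤ n) : ∑ x : ZMod p, x ^ i * f x ^ j = 0 := by
  have hlt : ∀ k < p - 1, ∑ x : ZMod p, x ^ k = 0 := fun k hk ↦
    FiniteField.sum_pow_lt_card_sub_one _ _ (by rwa [ZMod.card])
  obtain rfl | hj := Nat.eq_zero_or_pos j
  · simpa using hlt i (by omega)
  set k := i + j with hk
  let c : ℕ → ZMod p := fun l ↦ (-1) ^ l * (k.choose l : ZMod p) * ∑ x, x ^ l * f x ^ (k - l)
  have hc : c k = 0 := by simp [c, hlt k (by omega)]
  let P : (ZMod p)[X] := ∑ l ∈ range k, C (c l) * X ^ l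
  have heval : ∀ m ∈ N, P.eval m = 0 := by
    intro m hm
    have hbij : ∑ x, (f x - m * x) ^ k = 0 := by
      rw [← hlt k (by omega)]
      exact (Finite.injective_iff_bijective.1 (hN m hm)).sum_comp fun y ↦ y ^ k
    have hexp : P.eval m = ∑ l ∈ range (k + 1), c l * m ^ l := by
      simp [P, eval_finsetSum, sum_range_succ, hc]
    rw [hexp, ← hbij]
    simp only [c, mul_sum, sum_mul]
    rw [sum_comm]
    refine sum_congr rfl fun x _ ↦ ?_
    rw [show f x - m * x = -(m * x) + f x by ring, add_pow]
    refine sum_congr rfl fun l _ ↦ ?_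
    rw [neg_pow (m * x), mul_pow]
    ring
  have hdeg : P.natDegree < k := by
    have h : P.natDegree ≤ k - 1 := natDegree_sum_le_of_forall_le _ _ fun l hl ↦
      (natDegree_C_mul_X_pow_le _ _).trans (by have := mem_range.1 hl; omega)
    omega
  have hP : P = 0 := eq_zero_of_natDegree_lt_card_of_eval_eq_zero' P N heval (by omega)
  have hci : c i = 0 := by
    have h : P.coeff i = c i := by
      simp only [P, finsetSum_coeff, coeff_C_mul_X_pow]
      rw [sum_ite_eq, if_pos (mem_range.2 (by omega))]
    rw [← h, hP, coeff_zero]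
  have hne : (-1) ^ i * (k.choose i : ZMod p) ≠ 0 :=
    mul_ne_zero (pow_ne_zero _ (by simp)) (natCast_choose_ne_zero (by omega) (by omega))
  simpa [hk] using (mul_eq_zero.1 hci).resolve_left hne

/-- A function on `ZMod p` whose graph misses at least `(p - 1) / 2` slopes is affine. -/
lemma exists_affine_of_injective_sub_mul (hp3 : 3 ≤ p) {f : ZMod p → ZMod p}
    {N : Finset (ZMod p)} (hN : ∀ m ∈ N, Function.Injective fun x ↦ f x - m * x)
    (hcard : p ≤ 2 * #N + 2) : ∃ c e, ∀ x, f x = c * x + e := by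
  obtain ⟨n, hn⟩ : ∃ n, p = 2 * n + 1 := (Fact.out : p.Prime).odd_of_ne_two (by omega)
  let q : (ZMod p)[X] := Lagrange.interpolate univ id f
  have hq : ∀ x, q.eval x = f x := fun x ↦
    Lagrange.eval_interpolate_at_node f (Set.injOn_id _) (mem_univ x)
  have hqdeg : q.natDegree < p := by
    have h : q.degree < (p : ℕ) := by
      have h : q.degree < #(univ : Finset (ZMod p)) :=
        Lagrange.degree_interpolate_lt f (Set.injOn_id _)
      rwa [card_univ, ZMod.card] at h
    by_cases hq0 : q = 0
    · rw [hq0, natDegree_zero]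
      omega
    · exact (natDegree_lt_iff_degree_lt hq0).2 h
  by_cases hd : q.natDegree ≤ 1
  · refine ⟨q.coeff 1, q.coeff 0, fun x ↦ ?_⟩
    rw [← hq, eval_eq_sum_range' (Nat.lt_succ_of_le hd)]
    simp [sum_range_succ]
    ring
  · exfalso
    set d := q.natDegree with hdq
    have hq0 : q ≠ 0 := fun h ↦ by simp [hdq, h] at hd
    set a := (p - 1) / d
    set b := (p - 1) % d
    have hab : d * a + b = p - 1 := Nat.div_add_mod _ _
    have hb : b < d := Nat.mod_lt _ (by omega)
    have ha : 1 ≤ a := Nat.div_pos (by omega) (by omega)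
    have hsum : b + a ≤ n := by
      obtain ⟨d', hd'⟩ : ∃ d', d = d' + 2 := ⟨d - 2, by omega⟩
      obtain ⟨a', ha'⟩ : ∃ a', a = a' + 1 := ⟨a - 1, by omega⟩
      have h1 : (d' + 2) * (a' + 1) + b = 2 * n := by rw [← hd', ← ha']; omega
      obtain rfl | hd0 := Nat.eq_zero_or_pos d'
      · omega
      obtain rfl | ha0 := Nat.eq_zero_or_pos a'
      · omega
      nlinarith [Nat.mul_le_mul hd0 ha0]
    have hr : (X ^ b * q ^ a).natDegree = p - 1 := by
      rw [natDegree_mul (pow_ne_zero _ X_ne_zero) (pow_ne_zero _ hq0), natDegree_X_pow,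
        natDegree_pow, ← hdq, ← hab]
      ring
    have h := sum_eval_of_natDegree_eq hr
    simp only [eval_mul, eval_pow, eval_X, hq] at h
    rw [moment_eq_zero hN (by omega) (by omega) hsum, eq_comm, neg_eq_zero,
      leadingCoeff_eq_zero] at h
    exact mul_ne_zero (pow_ne_zero _ X_ne_zero) (pow_ne_zero _ hq0) h

end Moments

/-- Every nonzero vector of the plane is the second vector of a basis. -/
lemma exists_linearEquiv_apply_eq {K : Type*} [Field K] {w : K × K} (hw : w ≠ 0) :
    ∃ e : (K × K) ≃ₗ[K] K × K, e (0, 1) = w := by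
  obtain ⟨a, b⟩ := w
  by_cases ha : a = 0
  · have hb : b ≠ 0 := fun hb ↦ hw (by simp [ha, hb])
    refine ⟨(LinearEquiv.refl K K).prodCongr (LinearEquiv.smulOfNeZero K K b hb), ?_⟩
    simp [ha]
  · refine ⟨{ toFun := fun z ↦ (a * z.2, z.1 + b * z.2)
              invFun := fun z ↦ (z.2 - b * (z.1 / a), z.1 / a)
              map_add' := fun x y ↦ by ext <;> simp <;> ring
              map_smul' := fun c x ↦ by ext <;> simp <;> ring
              left_inv := fun z ↦ by ext <;> simp [ha]
              right_inv := fun z ↦ by ext <;> simp [mul_div_cancel₀, ha] }, ?_⟩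
    simp

/-- The direction of slope `m` in the coordinates given by `e`. -/
def slopeLine {K : Type*} [Field K] (e : (K × K) ≃ₗ[K] K × K) (m : K) : Submodule K (K × K) :=
  Submodule.span K {e (1, m)}

lemma mem_slopeLine {K : Type*} [Field K] {e : (K × K) ≃ₗ[K] K × K} {m x y : K} :
    e (x, y) ∈ slopeLine e m ↔ y = m * x := by
  rw [slopeLine, Submodule.mem_span_singleton]
  constructor
  · rintro ⟨c, hc⟩
    rw [← map_smul, e.injective.eq_iff, Prod.ext_iff] at hc
    simp only [Prod.smul_mk, smul_eq_mul, mul_one] at hc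
    rw [← hc.2, hc.1, mul_comm]
  · rintro rfl
    exact ⟨x, by rw [← map_smul, Prod.smul_mk, smul_eq_mul, smul_eq_mul, mul_one, mul_comm]⟩

lemma finrank_slopeLine {K : Type*} [Field K] (e : (K × K) ≃ₗ[K] K × K) (m : K) :
    Module.finrank K (slopeLine e m) = 1 :=
  finrank_span_singleton ((map_ne_zero_iff e e.injective).2 (by simp))

lemma slopeLine_injective {K : Type*} [Field K] (e : (K × K) ≃ₗ[K] K × K) :
    Function.Injective (slopeLine e) := fun m m' h ↦ by
  have hm : e (1, m) ∈ slopeLine e m' := h ▸ mem_slopeLine.2 (mul_one m).symm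
  simpa using mem_slopeLine.1 hm

/-- The number of determined directions is at least the number of determined slopes. -/
lemma card_le_card_determines {p : ℕ} [Fact p.Prime] {S : Set (ZMod p × ZMod p)}
    (e : (ZMod p × ZMod p) ≃ₗ[ZMod p] ZMod p × ZMod p) (M : Finset (ZMod p))
    (hM : ∀ m ∈ M, Determines p S (slopeLine e m)) :
    M.card ≤ Nat.card {H : Submodule (ZMod p) (ZMod p × ZMod p) //
        Module.finrank (ZMod p) H = 1 ∧ Determines p S H} := by
  rw [← Nat.card_eq_finsetCard M]
  exact Nat.card_le_card_of_injective
    (fun m : M ↦ ⟨slopeLine e m, finrank_slopeLine e m, hM m m.2⟩)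
    fun m m' h ↦ Subtype.ext (slopeLine_injective e (congrArg Subtype.val h))

/-- A set of size `p` not determining some direction is, in suitable coordinates, the graph of
a function. -/
lemma exists_graph_of_not_determines {p : ℕ} [Fact p.Prime] {S : Set (ZMod p × ZMod p)}
    (hcard : S.ncard = p) {H : Submodule (ZMod p) (ZMod p × ZMod p)}
    (hH : Module.finrank (ZMod p) H = 1) (hS : ¬ Determines p S H) :
    ∃ (e : (ZMod p × ZMod p) ≃ₗ[ZMod p] ZMod p × ZMod p) (f : ZMod p → ZMod p),
      S = Set.range fun x ↦ e (x, f x) := by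
  obtain ⟨w, hw, hw0⟩ := H.exists_mem_ne_zero_of_ne_bot fun h : H = ⊥ ↦ by
    rw [h, finrank_bot] at hH
    omega
  obtain ⟨e, rfl⟩ := exists_linearEquiv_apply_eq hw0
  have hinj : Function.Injective fun z : S ↦ (e.symm z).1 := by
    intro x y hxy
    by_contra hne
    refine hS ⟨x, x.2, y, y.2, fun h ↦ hne (Subtype.ext h), ?_⟩
    have h : (x : ZMod p × ZMod p) - y = ((e.symm x).2 - (e.symm y).2) • e (0, 1) := by
      apply e.symm.injective
      ext <;> simp
      exact sub_eq_zero.2 hxy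
    exact h ▸ H.smul_mem _ hw
  have hbij : Function.Bijective fun z : S ↦ (e.symm z).1 :=
    (Nat.bijective_iff_injective_and_card _).2 ⟨hinj, by
      rw [Nat.card_coe_set_eq, hcard, Nat.card_zmod]⟩
  let g := (Equiv.ofBijective _ hbij).symm
  refine ⟨e, fun x ↦ (e.symm (g x)).2, ?_⟩
  have hg : ∀ x, e (x, (e.symm (g x)).2) = g x := fun x ↦ by
    have h : (e.symm (g x)).1 = x := (Equiv.ofBijective _ hbij).apply_symm_apply x
    nth_rewrite 1 [← h]
    exact e.apply_symm_apply _
  ext z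
  simp only [hg, Set.mem_range]
  exact ⟨fun hz ↦ ⟨g.symm ⟨z, hz⟩, by simp⟩, by rintro ⟨x, rfl⟩; exact (g x).2⟩

lemma isLine_of_affine {p : ℕ} [Fact p.Prime]
    (e : (ZMod p × ZMod p) ≃ₗ[ZMod p] ZMod p × ZMod p) (c d : ZMod p) :
    IsLine p (Set.range fun x ↦ e (x, c * x + d)) := by
  refine ⟨e (0, d), slopeLine e c, finrank_slopeLine e c, ?_⟩
  ext z
  simp only [Set.mem_range, Set.mem_image, SetLike.mem_coe]
  constructor
  · rintro ⟨x, rfl⟩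
    exact ⟨e (x, c * x), mem_slopeLine.2 rfl, by
      rw [← map_add, Prod.mk_add_mk, zero_add, add_comm]⟩
  · rintro ⟨v, hv, rfl⟩
    obtain ⟨⟨x, y⟩, rfl⟩ := e.surjective v
    obtain rfl := mem_slopeLine.1 hv
    exact ⟨x, by rw [← map_add, Prod.mk_add_mk, zero_add, add_comm]⟩

theorem stmt3 (p : ℕ) (hp : p.Prime) (hp3 : 3 ≤ p) [NeZero p]
    (S : Set (ZMod p × ZMod p)) (hcard : S.ncard = p)
    (hline : ¬ IsLine p S) :
    2 * Nat.card {H : Submodule (ZMod p) (ZMod p × ZMod p) //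
        Module.finrank (ZMod p) H = 1 ∧ Determines p S H} ≥ p + 3 := by
  have : Fact p.Prime := ⟨hp⟩
  by_cases hall : ∀ H : Submodule (ZMod p) (ZMod p × ZMod p),
      Module.finrank (ZMod p) H = 1 → Determines p S H
  · have h := card_le_card_determines (S := S) (LinearEquiv.refl _ _) Finset.univ
      fun m _ ↦ hall _ (finrank_slopeLine _ m)
    rw [Finset.card_univ, ZMod.card] at h
    omega
  push Not at hall
  obtain ⟨H, hH, hS⟩ := hall
  obtain ⟨e, f, rfl⟩ := exists_graph_of_not_determines hcard hH hS
  let N : Finset (ZMod p) :=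
    Finset.univ.filter fun m ↦ Function.Injective fun x ↦ f x - m * x
  have h := card_le_card_determines (S := Set.range fun x ↦ e (x, f x)) e Nᶜ fun m hm ↦ by
    have hm' : ¬ Function.Injective fun x ↦ f x - m * x := fun hinj ↦
      Finset.mem_compl.1 hm (Finset.mem_filter.2 ⟨Finset.mem_univ m, hinj⟩)
    obtain ⟨x, y, hxy, hne⟩ := Function.not_injective_iff.1 hm'
    refine ⟨_, ⟨x, rfl⟩, _, ⟨y, rfl⟩, fun h ↦ hne (congrArg Prod.fst (e.injective h)), ?_⟩
    rw [← map_sub, Prod.mk_sub_mk, mem_slopeLine]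
    linear_combination hxy
  rw [Finset.card_compl, ZMod.card] at h
  have hN : N.card ≤ p := by simpa [ZMod.card] using N.card_le_univ
  by_contra! hlt
  obtain ⟨n, hn⟩ := hp.odd_of_ne_two (by omega)
  obtain ⟨c, d, hf⟩ := exists_affine_of_injective_sub_mul hp3
    (fun m hm ↦ (Finset.mem_filter.1 hm).2) (show p ≤ 2 * N.card + 2 by omega)
  exact hline (by simpa only [hf] using isLine_of_affine e c d)
end
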